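/- Let P_{XY} be a probability distribution on a finite set X×Y and Φ_{Y^n} be the uniform mixture over type classes of Y^n. For any α > 0 and all n ∈ ℕ, one has I_α(X:Y)_{P_{XY}} ≤ (1/n) D_α(P_{XY}^{×n} ‖ P_X^{×n} × Φ_{Y^n}) ≤ I_α(X:Y)_{P_{XY}} + (|Y|/n)·log₂(n+1); in particular (1/n) D_α(P_{XY}^{×n} ‖ P_X^{×n} × Φ_{Y^n}) = I_α(X:Y)_{P_{XY}} + O(log n / n). -/

import Mathlib

open scoped ENNReal NNReal BigOperators Classical
open Filter

noncomputable section

namespace RST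

/-- Base-2 logarithm `ℝ≥0∞ → EReal`, with `log 0 = ⊥` and `log ⊤ = ⊤`. -/
def elog2 (s : ℝ≥0∞) : EReal :=
  if s = 0 then ⊥ else if s = ⊤ then ⊤ else ((Real.logb 2 s.toReal : ℝ) : EReal)

/-- Base-2 logarithm `EReal → EReal` (for nonnegative arguments). -/
def eLog2 (x : EReal) : EReal :=
  if x = ⊤ then ⊤ else if x ≤ 0 then ⊥ else ((Real.logb 2 x.toReal : ℝ) : EReal)

/-- Base-2 exponential `EReal → ℝ≥0∞`. -/
def epow2 (x : EReal) : ℝ≥0∞ :=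
  if x = ⊤ then ⊤ else if x = ⊥ then 0 else ENNReal.ofReal ((2 : ℝ) ^ x.toReal)

variable {X Y : Type*}

/-- A probability distribution on a finite alphabet, as an `ℝ≥0∞`-valued function. -/
def IsDist [Fintype X] (P : X → ℝ≥0∞) : Prop := ∑ x, P x = 1

/-- A discrete memoryless channel: every row is a probability distribution. -/
def IsChannel [Fintype X] [Fintype Y] (W : X → Y → ℝ≥0∞) : Prop := ∀ x, ∑ y, W x y = 1

/-- Order-`α` Rényi divergence (base 2), with the order `α ∈ [0,∞]` encoded as `ℝ≥0∞`.
The conventions `0/0 = 0` and `a/0 = ∞` (for `a > 0`, `α > 1`) are built into `ℝ≥0∞`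
arithmetic.  The second argument is allowed to be an arbitrary nonnegative vector. -/
def renyiD [Fintype X] (α : ℝ≥0∞) (P Q : X → ℝ≥0∞) : EReal :=
  if α = 0 then - elog2 (∑ x ∈ Finset.univ.filter fun x => P x ≠ 0, Q x)
  else if α = 1 then ∑ x, ((P x).toReal : EReal) * elog2 (P x / Q x)
  else if α = ⊤ then elog2 (⨆ x, P x / Q x)
  else (((α.toReal - 1)⁻¹ : ℝ) : EReal) *
    elog2 (∑ x, P x ^ α.toReal * Q x ^ (1 - α.toReal))

/-- The `X`-marginal of a joint distribution on `X × Y`. -/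
def margX [Fintype X] [Fintype Y] (P : X × Y → ℝ≥0∞) : X → ℝ≥0∞ := fun x => ∑ y, P (x, y)

/-- Order-`α` Rényi mutual information `I_α(X:Y)_P = min_{Q_Y} D_α(P‖P_X × Q_Y)`. -/
def renyiMI [Fintype X] [Fintype Y] (α : ℝ≥0∞) (P : X × Y → ℝ≥0∞) : EReal :=
  ⨅ Q : {Q : Y → ℝ≥0∞ // IsDist Q}, renyiD α P fun p => margX P p.1 * Q.1 p.2

/-- The joint input-output distribution `P_X · W`. -/
def joint [Fintype X] [Fintype Y] (PX : X → ℝ≥0∞) (W : X → Y → ℝ≥0∞) : X × Y → ℝ≥0∞ :=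
  fun p => PX p.1 * W p.1 p.2

/-- Order-`α` Rényi capacity `I_α(W) = max_{P_X} I_α(X:Y)_{P_X · W}`. -/
def renyiCap [Fintype X] [Fintype Y] (α : ℝ≥0∞) (W : X → Y → ℝ≥0∞) : EReal :=
  ⨆ P : {P : X → ℝ≥0∞ // IsDist P}, renyiMI α (joint P.1 W)

/-- `N` is a simulation of a channel `X → Y` with communication cost at most `c` bits:
shared randomness `K = Fin m` with distribution `PK`, a message set `{1,…,M}` with
`log₂ M ≤ c`, an encoder `E` and a decoder `D`. -/
def IsSimulation [Fintype X] [Fintype Y] (c : ℝ) (N : X → Y → ℝ≥0∞) : Prop :=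
  ∃ (m M : ℕ) (PK : Fin m → ℝ≥0∞) (E : X → Fin m → Fin M → ℝ≥0∞)
    (D : Fin M → Fin m → Y → ℝ≥0∞),
    0 < M ∧ Real.logb 2 M ≤ c ∧ (∑ k, PK k = 1) ∧
    (∀ x k, ∑ j, E x k j = 1) ∧ (∀ j k, ∑ y, D j k y = 1) ∧
    ∀ x y, N x y = ∑ k, ∑ j, PK k * E x k j * D j k y

/-- `D_α(W, N) := max_x D_α(W(·|x) ‖ N(·|x))`. -/
def chD [Fintype X] [Fintype Y] (α : ℝ≥0∞) (W N : X → Y → ℝ≥0∞) : EReal :=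
  ⨆ x, renyiD α (W x) (N x)

/-- `𝖣_α(W, c) := min_{N ∈ A(W,c)} D_α(W, N)`. -/
def simD [Fintype X] [Fintype Y] (α : ℝ≥0∞) (W : X → Y → ℝ≥0∞) (c : ℝ) : EReal :=
  ⨅ N : {N : X → Y → ℝ≥0∞ // IsSimulation c N}, chD α W N.1

/-- The `n`-fold memoryless extension `W^{×n}` of a channel `W`. -/
def prodCh [Fintype X] [Fintype Y] (n : ℕ) (W : X → Y → ℝ≥0∞) :
    (Fin n → X) → (Fin n → Y) → ℝ≥0∞ :=
  fun xs ys => ∏ i, W (xs i) (ys i)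

/-- A sequence of communication costs with rate at most `r`. -/
def RateOK (r : ℝ) (c : ℕ → ℝ) : Prop :=
  (∀ n, 0 ≤ c n) ∧ Filter.limsup (fun n : ℕ => ((c n / n : ℝ) : EReal)) Filter.atTop ≤ (r : EReal)

/-- Reliability function `E_rf^{(α)}(W, r)`. -/
def Erf [Fintype X] [Fintype Y] (α : ℝ≥0∞) (W : X → Y → ℝ≥0∞) (r : ℝ) : EReal :=
  ⨆ c : {c : ℕ → ℝ // RateOK r c},
    Filter.liminf
      (fun n : ℕ => (((-1 : ℝ) / n : ℝ) : EReal) * eLog2 (simD α (prodCh n W) (c.1 n)))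
      Filter.atTop

/-- Strong converse exponent `E_sc^{(α)}(W, r)`. -/
def Esc [Fintype X] [Fintype Y] (α : ℝ≥0∞) (W : X → Y → ℝ≥0∞) (r : ℝ) : EReal :=
  ⨅ c : {c : ℕ → ℝ // RateOK r c},
    Filter.limsup
      (fun n : ℕ => (((1 : ℝ) / n : ℝ) : EReal) * simD α (prodCh n W) (c.1 n))
      Filter.atTop

/-- The `α`-Rényi simulation rate `R_RST^{(α)}(W)`. -/
def Rrst [Fintype X] [Fintype Y] (α : ℝ≥0∞) (W : X → Y → ℝ≥0∞) : EReal :=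
  ⨅ c : {c : ℕ → ℝ // (∀ n, 0 ≤ c n) ∧
      Filter.limsup (fun n : ℕ => simD α (prodCh n W) (c n)) Filter.atTop = 0},
    Filter.limsup (fun n : ℕ => ((c.1 n / n : ℝ) : EReal)) Filter.atTop

/-- n-fold product of a joint distribution on `X × Y`, as a distribution on pairs of
sequences. -/
def prodJoint [Fintype X] [Fintype Y] (n : ℕ) (P : X × Y → ℝ≥0∞) :
    (Fin n → X) × (Fin n → Y) → ℝ≥0∞ :=
  fun p => ∏ i, P (p.1 i, p.2 i)

/-- n-fold product distribution. -/
def prodDist [Fintype X] (n : ℕ) (P : X → ℝ≥0∞) : (Fin n → X) → ℝ≥0∞ :=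
  fun xs => ∏ i, P (xs i)

/-- The type (empirical count vector) of a sequence. -/
def seqType [Fintype Y] [DecidableEq Y] {n : ℕ} (ys : Fin n → Y) : Y → ℕ :=
  fun y => (Finset.univ.filter fun i => ys i = y).card

/-- The cardinality of the type class of a sequence. -/
def typeClassCard [Fintype Y] [DecidableEq Y] {n : ℕ} (ys : Fin n → Y) : ℕ :=
  (Finset.univ.filter fun zs : Fin n → Y => seqType zs = seqType ys).card

/-- The number of types of sequences in `Y^n`. -/
def numTypes (Y : Type*) [Fintype Y] [DecidableEq Y] (n : ℕ) : ℕ :=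
  (Finset.univ.image fun ys : Fin n → Y => seqType ys).card

/-- `Φ_{Y^n}`: the uniform mixture over type classes of `Y^n`. -/
def PhiY (Y : Type*) [Fintype Y] [DecidableEq Y] (n : ℕ) : (Fin n → Y) → ℝ≥0∞ :=
  fun ys => ((numTypes Y n : ℝ≥0∞) * (typeClassCard ys : ℝ≥0∞))⁻¹

end RST

namespace RST

/-!
Upper bound: `Q^{×n}` is constant on each type class, hence at most
`|P_n(Y)| Φ_{Y^n} ≤ (n+1)^{|Y|} Φ_{Y^n}`. As `D_α` decreases in its second argument and shifts by
`-log₂ c` when that argument is scaled by `c`, replacing `Q^{×n}` by `Φ_{Y^n}` costs at most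
`|Y| log₂(n+1)`; take for `Q` the minimiser in `I_α`.

Lower bound: `Φ_{Y^n}` is a candidate in the minimum defining `I_α` of `P_{XY}^{×n}`, so it
suffices that `I_α` is additive. This follows from Sibson's identity
`D_α(P_{XY}‖P_X × R) = D_α(P_{XY}‖P_X × Q) + D_α(Q‖R)`, valid for every `R` with
`Q ∝ (∑ₓ P_{XY}(x,·)^α P_X(x)^{1-α})^{1/α}`: it shows that this `Q` is the minimiser, and the
formula for `Q` turns products into products.
-/

section ENNReal

lemma antitone_rpow_of_nonpos {z : ℝ} (hz : z ≤ 0) : Antitone fun x : ℝ≥0∞ => x ^ z := by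
  intro x y hxy
  simp only
  rw [← neg_neg z, ENNReal.rpow_neg, ENNReal.rpow_neg x]
  exact ENNReal.inv_le_inv.2 (ENNReal.rpow_le_rpow hxy (neg_nonneg.2 hz))

lemma mul_rpow_of_ne_zero_of_ne_top {c : ℝ≥0∞} (hc₀ : c ≠ 0) (hc : c ≠ ⊤) (x : ℝ≥0∞) (z : ℝ) :
    (c * x) ^ z = c ^ z * x ^ z := by
  rw [ENNReal.mul_rpow_eq_ite, if_neg (by simp [hc₀, hc])]

lemma rpow_mul_rpow_one_sub {x : ℝ≥0∞} (hx : x ≠ ⊤) (α : ℝ) : x ^ α * x ^ (1 - α) = x := by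
  rw [← ENNReal.rpow_add_of_add_pos hx _ _ (by simp), add_sub_cancel, ENNReal.rpow_one]

lemma prod_rpow_toReal {ι : Type*} (s : Finset ι) (c : ℝ≥0∞) {p : ι → ℝ≥0∞}
    (hp : ∀ i ∈ s, p i ≠ ⊤) : ∏ i ∈ s, c ^ (p i).toReal = c ^ (∑ i ∈ s, p i).toReal := by
  rw [ENNReal.toReal_sum hp]
  clear hp
  induction s using Finset.induction with
  | empty => simp
  | insert i s hi ih =>
    rw [Finset.prod_insert hi, Finset.sum_insert hi, ih, ENNReal.rpow_add_of_nonneg _ _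
      ENNReal.toReal_nonneg (Finset.sum_nonneg fun _ _ => ENNReal.toReal_nonneg)]

end ENNReal

section Log

lemma inv_log_two_pos : 0 < (Real.log 2)⁻¹ := inv_pos.2 (Real.log_pos one_lt_two)

lemma elog2_eq_mul_log (s : ℝ≥0∞) :
    elog2 s = (((Real.log 2)⁻¹ : ℝ) : EReal) * ENNReal.log s := by
  unfold elog2
  split_ifs with h₀ h
  · rw [h₀, ENNReal.log_zero, EReal.coe_mul_bot_of_pos inv_log_two_pos]
  · rw [h, ENNReal.log_top, EReal.coe_mul_top_of_pos inv_log_two_pos]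
  · rw [ENNReal.log_pos_real h₀ h, ← EReal.coe_mul, Real.logb, div_eq_inv_mul]

lemma elog2_mono : Monotone elog2 := by
  intro s t hst
  rw [elog2_eq_mul_log, elog2_eq_mul_log]
  exact mul_le_mul_of_nonneg_left (ENNReal.log_le_log hst) (mod_cast inv_log_two_pos.le)

lemma elog2_mul (s t : ℝ≥0∞) : elog2 (s * t) = elog2 s + elog2 t := by
  simp only [elog2_eq_mul_log, ENNReal.log_mul_add]
  exact EReal.left_distrib_of_nonneg_of_ne_top (mod_cast inv_log_two_pos.le)
    (EReal.coe_ne_top _) _ _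

lemma elog2_rpow (s : ℝ≥0∞) (r : ℝ) : elog2 (s ^ r) = (r : EReal) * elog2 s := by
  rw [elog2_eq_mul_log, elog2_eq_mul_log, ENNReal.log_rpow, mul_left_comm]

lemma elog2_prod {ι : Type*} (s : Finset ι) (f : ι → ℝ≥0∞) :
    elog2 (∏ i ∈ s, f i) = ∑ i ∈ s, elog2 (f i) := by
  induction s using Finset.induction with
  | empty => simp [elog2]
  | insert i s hi ih => rw [Finset.prod_insert hi, Finset.sum_insert hi, elog2_mul, ih]

end Log

section Distributions

variable {ι X Y : Type*} [Fintype ι] [Fintype X] [Fintype Y]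

lemma IsDist.ne_top {P : ι → ℝ≥0∞} (hP : IsDist P) (x : ι) : P x ≠ ⊤ :=
  ENNReal.sum_ne_top.1 (by rw [hP]; exact ENNReal.one_ne_top) x (Finset.mem_univ x)

lemma IsDist.sum_toReal {P : ι → ℝ≥0∞} (hP : IsDist P) : ∑ x, (P x).toReal = 1 := by
  rw [← ENNReal.toReal_sum fun x _ => hP.ne_top x, hP, ENNReal.toReal_one]

lemma isDist_margX {P : X × Y → ℝ≥0∞} (hP : IsDist P) : IsDist (margX P) := by
  simpa only [IsDist, margX, Fintype.sum_prod_type] using hP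

lemma le_margX (P : X × Y → ℝ≥0∞) (p : X × Y) : P p ≤ margX P p.1 :=
  Finset.single_le_sum (f := fun y => P (p.1, y)) (fun _ _ => zero_le) (Finset.mem_univ p.2)

lemma isDist_prodDist (n : ℕ) {P : ι → ℝ≥0∞} (hP : IsDist P) : IsDist (prodDist n P) := by
  simp only [IsDist, prodDist]
  rw [← Fintype.sum_pow, hP, one_pow]

lemma isDist_prodJoint (n : ℕ) {P : X × Y → ℝ≥0∞} (hP : IsDist P) : IsDist (prodJoint n P) := by
  rw [IsDist, ← isDist_prodDist n hP,
    ← Equiv.sum_comp (Equiv.arrowProdEquivProdArrow (Fin n) (fun _ => X) (fun _ => Y))]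
  rfl

lemma margX_prodJoint (n : ℕ) (P : X × Y → ℝ≥0∞) :
    margX (prodJoint n P) = prodDist n (margX P) :=
  funext fun xs => (Fintype.prod_sum fun i y => P (xs i, y)).symm

lemma sum_filter_prodDist (n : ℕ) {P : ι → ℝ≥0∞} (hP : IsDist P) (i : Fin n) (x : ι) :
    ∑ xs : Fin n → ι with xs i = x, prodDist n P xs = P x := by
  let S : Fin n → Finset ι := Function.update (fun _ => Finset.univ) i {x}
  calc ∑ xs : Fin n → ι with xs i = x, prodDist n P xs
      = ∏ j, ∑ z ∈ S j, P z := by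
        rw [Finset.prod_univ_sum, Fintype.piFinset_update_singleton_eq_filter_piFinset_eq
          (fun _ => Finset.univ) i (Finset.mem_univ x), Fintype.piFinset_univ]
        rfl
    _ = ∑ z ∈ S i, P z := by
        refine Finset.prod_eq_single i (fun j _ hj => ?_) (by simp)
        rw [show S j = Finset.univ from Function.update_of_ne hj _ _, hP]
    _ = P x := by simp [S]

end Distributions

section Divergence

variable {ι κ X Y : Type*} [Fintype ι] [Fintype κ] [Fintype X] [Fintype Y]

/-- The exponentiated Rényi divergence `2 ^ D_α(P‖Q)` of finite order. With values in `ℝ≥0∞`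
instead of `EReal`, divergences add up by multiplication, which has no analogue of `⊥ + ⊤`. -/
def expRenyiD (α : ℝ) (P Q : ι → ℝ≥0∞) : ℝ≥0∞ :=
  if α = 1 then ∏ x, (P x / Q x) ^ (P x).toReal
  else (∑ x, P x ^ α * Q x ^ (1 - α)) ^ (α - 1)⁻¹

lemma expRenyiD_one (P Q : ι → ℝ≥0∞) :
    expRenyiD 1 P Q = ∏ x, (P x / Q x) ^ (P x).toReal :=
  if_pos rfl

lemma expRenyiD_of_ne_one {α : ℝ} (h₁ : α ≠ 1) (P Q : ι → ℝ≥0∞) :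
    expRenyiD α P Q = (∑ x, P x ^ α * Q x ^ (1 - α)) ^ (α - 1)⁻¹ :=
  if_neg h₁

lemma renyiD_eq_elog2_expRenyiD {α : ℝ} (hα : 0 < α) (P Q : ι → ℝ≥0∞) :
    renyiD (ENNReal.ofReal α) P Q = elog2 (expRenyiD α P Q) := by
  rcases eq_or_ne α 1 with rfl | h₁
  · simp only [renyiD, ENNReal.ofReal_one, one_ne_zero, if_false, if_true, expRenyiD_one,
      elog2_prod, elog2_rpow]
  · rw [renyiD, if_neg (by simpa using hα), if_neg (by simpa using h₁),
      if_neg ENNReal.ofReal_ne_top, ENNReal.toReal_ofReal hα.le, expRenyiD_of_ne_one h₁, elog2_rpow]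

lemma expRenyiD_antitone (α : ℝ) (P : ι → ℝ≥0∞) : Antitone (expRenyiD α P) := by
  intro Q R hQR
  rcases lt_trichotomy α 1 with h₁ | rfl | h₁
  · rw [expRenyiD_of_ne_one h₁.ne, expRenyiD_of_ne_one h₁.ne]
    exact antitone_rpow_of_nonpos (inv_nonpos.2 (sub_nonpos.2 h₁.le)) <|
      Finset.sum_le_sum fun x _ =>
        mul_le_mul_right (ENNReal.rpow_le_rpow (hQR x) (sub_nonneg.2 h₁.le)) _
  · rw [expRenyiD_one, expRenyiD_one]
    exact Finset.prod_le_prod' fun x _ =>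
      ENNReal.rpow_le_rpow (ENNReal.div_le_div_left (hQR x) _) ENNReal.toReal_nonneg
  · rw [expRenyiD_of_ne_one h₁.ne', expRenyiD_of_ne_one h₁.ne']
    exact ENNReal.rpow_le_rpow (Finset.sum_le_sum fun x _ =>
      mul_le_mul_right (antitone_rpow_of_nonpos (sub_nonpos.2 h₁.le) (hQR x)) _)
      (inv_nonneg.2 (sub_nonneg.2 h₁.le))

lemma expRenyiD_const_mul (α : ℝ) {P : ι → ℝ≥0∞} (hP : IsDist P) (Q : ι → ℝ≥0∞) {c : ℝ≥0∞}
    (hc₀ : c ≠ 0) (hc : c ≠ ⊤) : expRenyiD α P (fun x => c * Q x) = c⁻¹ * expRenyiD α P Q := by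
  rcases eq_or_ne α 1 with rfl | h₁
  · have hterm (x : ι) : (P x / (c * Q x)) ^ (P x).toReal
        = c⁻¹ ^ (P x).toReal * (P x / Q x) ^ (P x).toReal := by
      rw [← ENNReal.mul_rpow_of_nonneg _ _ ENNReal.toReal_nonneg, ENNReal.div_eq_inv_mul,
        ENNReal.mul_inv (.inl hc₀) (.inl hc), ENNReal.div_eq_inv_mul, mul_assoc]
    simp only [expRenyiD_one, hterm, Finset.prod_mul_distrib]
    rw [prod_rpow_toReal _ _ fun x _ => hP.ne_top x, hP, ENNReal.toReal_one, ENNReal.rpow_one]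
  · have hterm (x : ι) : P x ^ α * (c * Q x) ^ (1 - α)
        = c⁻¹ ^ (α - 1) * (P x ^ α * Q x ^ (1 - α)) := by
      rw [mul_rpow_of_ne_zero_of_ne_top hc₀ hc, ENNReal.inv_rpow, ← ENNReal.rpow_neg, neg_sub,
        mul_left_comm]
    have hc₀' : c⁻¹ ^ (α - 1) ≠ 0 := by simp [ENNReal.rpow_eq_zero_iff, hc₀, hc]
    have hc' : c⁻¹ ^ (α - 1) ≠ ⊤ := by simp [ENNReal.rpow_eq_top_iff, hc₀, hc]
    simp only [expRenyiD_of_ne_one h₁, hterm, ← Finset.mul_sum]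
    rw [mul_rpow_of_ne_zero_of_ne_top hc₀' hc', ENNReal.rpow_rpow_inv (sub_ne_zero.2 h₁)]

lemma renyiD_le_add_elog2_of_le_mul {α : ℝ} (hα : 0 < α) {P Q R : ι → ℝ≥0∞} (hP : IsDist P)
    {c : ℝ≥0∞} (hc₀ : c ≠ 0) (hc : c ≠ ⊤) (hQR : ∀ x, Q x ≤ c * R x) :
    renyiD (ENNReal.ofReal α) P R ≤ renyiD (ENNReal.ofReal α) P Q + elog2 c := by
  simp only [renyiD_eq_elog2_expRenyiD hα]
  rw [← elog2_mul, mul_comm]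
  refine elog2_mono ?_
  calc expRenyiD α P R = c * (c⁻¹ * expRenyiD α P R) := by
        rw [← mul_assoc, ENNReal.mul_inv_cancel hc₀ hc, one_mul]
    _ = c * expRenyiD α P (fun x => c * R x) := by rw [expRenyiD_const_mul α hP R hc₀ hc]
    _ ≤ c * expRenyiD α P Q := mul_le_mul_right (expRenyiD_antitone α P hQR) c

lemma expRenyiD_comp_equiv (α : ℝ) (e : ι ≃ κ) (P Q : κ → ℝ≥0∞) :
    expRenyiD α (P ∘ e) (Q ∘ e) = expRenyiD α P Q := by
  simp only [expRenyiD, Function.comp_apply]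
  rw [e.prod_comp fun x => (P x / Q x) ^ (P x).toReal,
    e.sum_comp fun x => P x ^ α * Q x ^ (1 - α)]

lemma expRenyiD_self {α : ℝ} {P : ι → ℝ≥0∞} (hP : IsDist P) : expRenyiD α P P = 1 := by
  rcases eq_or_ne α 1 with rfl | h₁
  · rw [expRenyiD_one]
    refine Finset.prod_eq_one fun x _ => ?_
    rcases eq_or_ne (P x) 0 with h₀ | h₀
    · simp [h₀]
    · rw [ENNReal.div_self h₀ (hP.ne_top x), ENNReal.one_rpow]
  · simp only [expRenyiD_of_ne_one h₁, rpow_mul_rpow_one_sub (hP.ne_top _)]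
    rw [hP, ENNReal.one_rpow]

lemma prod_rpow_prodDist_coord (n : ℕ) {P : ι → ℝ≥0∞} (hP : IsDist P) (f : ι → ℝ≥0∞)
    (i : Fin n) :
    ∏ xs : Fin n → ι, f (xs i) ^ (prodDist n P xs).toReal = ∏ x, f x ^ (P x).toReal := by
  rw [← Finset.prod_fiberwise Finset.univ fun xs : Fin n → ι => xs i]
  refine Finset.prod_congr rfl fun x _ => ?_
  rw [← sum_filter_prodDist n hP i x,
    ← prod_rpow_toReal _ _ fun xs _ => (isDist_prodDist n hP).ne_top xs]
  exact Finset.prod_congr rfl fun xs hxs => by rw [(Finset.mem_filter.1 hxs).2]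

lemma expRenyiD_prodDist (n : ℕ) {α : ℝ} (hα : 0 < α) {P Q : ι → ℝ≥0∞} (hP : IsDist P)
    (hQ : ∀ x, Q x ≠ ⊤) :
    expRenyiD α (prodDist n P) (prodDist n Q) = expRenyiD α P Q ^ n := by
  rcases eq_or_ne α 1 with rfl | h₁
  · have hterm (xs : Fin n → ι) : (prodDist n P xs / prodDist n Q xs) ^ (prodDist n P xs).toReal
        = ∏ i, (P (xs i) / Q (xs i)) ^ (prodDist n P xs).toReal := by
      rw [ENNReal.prod_rpow_of_nonneg ENNReal.toReal_nonneg,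
        ENNReal.prod_div_distrib_of_ne_top fun i _ => hQ _, prodDist, prodDist]
    simp only [expRenyiD_one, hterm]
    rw [Finset.prod_comm]
    simp only [prod_rpow_prodDist_coord n hP fun x => P x / Q x, Finset.prod_const,
      Finset.card_univ, Fintype.card_fin]
  · have hterm (xs : Fin n → ι) : prodDist n P xs ^ α * prodDist n Q xs ^ (1 - α)
        = ∏ i, P (xs i) ^ α * Q (xs i) ^ (1 - α) := by
      rw [Finset.prod_mul_distrib, ENNReal.prod_rpow_of_nonneg hα.le,
        ENNReal.prod_rpow_of_ne_top fun i _ => hQ _, prodDist, prodDist]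
    simp only [expRenyiD_of_ne_one h₁, hterm]
    rw [← Fintype.sum_pow fun x => P x ^ α * Q x ^ (1 - α), ← ENNReal.rpow_natCast_mul, mul_comm,
      ENNReal.rpow_mul_natCast]

lemma renyiD_prodJoint (n : ℕ) {α : ℝ} (hα : 0 < α) {P : X × Y → ℝ≥0∞} (hP : IsDist P)
    {A : X → ℝ≥0∞} (hA : ∀ x, A x ≠ ⊤) {Q : Y → ℝ≥0∞} (hQ : ∀ y, Q y ≠ ⊤) :
    renyiD (ENNReal.ofReal α) (prodJoint n P) (fun p => prodDist n A p.1 * prodDist n Q p.2)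
      = ((n : ℝ) : EReal) * renyiD (ENNReal.ofReal α) P fun p => A p.1 * Q p.2 := by
  let e := Equiv.arrowProdEquivProdArrow (Fin n) (fun _ => X) (fun _ => Y)
  have hP_e : prodJoint n P ∘ e = prodDist n P := rfl
  have hAQ_e : (fun p => prodDist n A p.1 * prodDist n Q p.2) ∘ e
      = prodDist n fun p => A p.1 * Q p.2 := funext fun _ => Finset.prod_mul_distrib.symm
  rw [renyiD_eq_elog2_expRenyiD hα, renyiD_eq_elog2_expRenyiD hα, ← elog2_rpow,
    ENNReal.rpow_natCast, ← expRenyiD_prodDist n hα hP fun p => ENNReal.mul_ne_top (hA _) (hQ _),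
    ← expRenyiD_comp_equiv α e, hP_e, hAQ_e]

end Divergence

section Nonnegativity

variable {ι : Type*} [Fintype ι] {P Q : ι → ℝ≥0∞}

lemma sum_rpow_mul_rpow_le_one {α : ℝ} (hα : 0 < α) (h₁ : α < 1) (hP : IsDist P)
    (hQ : IsDist Q) : ∑ x, P x ^ α * Q x ^ (1 - α) ≤ 1 := by
  have holder := ENNReal.inner_le_Lp_mul_Lq Finset.univ (fun x => P x ^ α)
    (fun x => Q x ^ (1 - α)) (Real.HolderConjugate.inv_one_sub_inv hα h₁)
  simp only [ENNReal.rpow_rpow_inv hα.ne', ENNReal.rpow_rpow_inv (sub_pos.2 h₁).ne'] at holder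
  rwa [hP, hQ, ENNReal.one_rpow, ENNReal.one_rpow, one_mul] at holder

lemma one_le_sum_rpow_mul_rpow {α : ℝ} (h₁ : 1 < α) (hP : IsDist P) (hQ : IsDist Q) :
    1 ≤ ∑ x, P x ^ α * Q x ^ (1 - α) := by
  have hα : 0 < α := zero_lt_one.trans h₁
  by_cases hPQ : ∀ x, Q x = 0 → P x = 0
  · have hmean := ENNReal.inner_le_weight_mul_Lp_of_nonneg Finset.univ h₁.le Q fun x => P x / Q x
    have hratio (x : ι) : Q x * (P x / Q x) = P x :=
      ENNReal.mul_div_cancel' (hPQ x) fun h => absurd h (hQ.ne_top x)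
    have hterm (x : ι) : Q x * (P x / Q x) ^ α = P x ^ α * Q x ^ (1 - α) := by
      rcases eq_or_ne (Q x) 0 with h₀ | h₀
      · simp [h₀, hPQ x h₀, hα]
      · rw [ENNReal.div_rpow_of_nonneg _ _ hα.le, ENNReal.rpow_sub _ _ h₀ (hQ.ne_top x),
          ENNReal.rpow_one, ← mul_div_assoc, ← mul_div_assoc, mul_comm]
    simp only [hratio, hterm] at hmean
    rw [hP, hQ, ENNReal.one_rpow, one_mul] at hmean
    simpa using (ENNReal.le_rpow_inv_iff hα).1 hmean
  · push Not at hPQ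
    obtain ⟨x, hQx, hPx⟩ := hPQ
    refine le_trans ?_ (Finset.single_le_sum (fun _ _ => zero_le) (Finset.mem_univ x))
    have hPxα : P x ^ α ≠ 0 := by simp [ENNReal.rpow_eq_zero_iff, hPx, hα.le]
    rw [hQx, ENNReal.zero_rpow_of_neg (sub_neg.2 h₁), ENNReal.mul_top hPxα]
    exact le_top

lemma one_le_prod_div_rpow_toReal (hP : IsDist P) (hQ : IsDist Q) :
    1 ≤ ∏ x, (P x / Q x) ^ (P x).toReal := by
  have hterm (x : ι) : (P x / Q x) ^ (P x).toReal
      = (ENNReal.ofReal ((Q x / P x).toReal ^ (P x).toReal))⁻¹ := by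
    rcases eq_or_ne (P x) 0 with h₀ | h₀
    · simp [h₀]
    · rw [← ENNReal.ofReal_rpow_of_nonneg ENNReal.toReal_nonneg ENNReal.toReal_nonneg,
        ENNReal.ofReal_toReal (ENNReal.div_ne_top (hQ.ne_top x) h₀), ← ENNReal.inv_rpow,
        ENNReal.inv_div (.inl (hP.ne_top x)) (.inl h₀)]
  have hamgm : ∏ x, (Q x / P x).toReal ^ (P x).toReal ≤ 1 :=
    calc ∏ x, (Q x / P x).toReal ^ (P x).toReal
        ≤ ∑ x, (P x).toReal * (Q x / P x).toReal :=
          Real.geom_mean_le_arith_mean_weighted _ _ _ (fun _ _ => ENNReal.toReal_nonneg)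
            hP.sum_toReal fun _ _ => ENNReal.toReal_nonneg
      _ ≤ ∑ x, (Q x).toReal := Finset.sum_le_sum fun x _ => by
          rw [← ENNReal.toReal_mul]
          exact ENNReal.toReal_mono (hQ.ne_top x) ENNReal.mul_div_le
      _ = 1 := hQ.sum_toReal
  simp only [hterm]
  rwa [← ENNReal.prod_inv_distrib fun _ _ _ _ _ => .inr ENNReal.ofReal_ne_top,
    ← ENNReal.ofReal_prod_of_nonneg fun _ _ => Real.rpow_nonneg ENNReal.toReal_nonneg _,
    ENNReal.one_le_inv, ENNReal.ofReal_le_one]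

lemma one_le_expRenyiD {α : ℝ} (hα : 0 < α) (hP : IsDist P) (hQ : IsDist Q) :
    1 ≤ expRenyiD α P Q := by
  rcases lt_trichotomy α 1 with h₁ | rfl | h₁
  · rw [expRenyiD_of_ne_one h₁.ne, ← ENNReal.one_rpow (α - 1)⁻¹]
    exact antitone_rpow_of_nonpos (inv_nonpos.2 (sub_nonpos.2 h₁.le))
      (sum_rpow_mul_rpow_le_one hα h₁ hP hQ)
  · rw [expRenyiD_one]
    exact one_le_prod_div_rpow_toReal hP hQ
  · rw [expRenyiD_of_ne_one h₁.ne', ← ENNReal.one_rpow (α - 1)⁻¹]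
    exact ENNReal.rpow_le_rpow (one_le_sum_rpow_mul_rpow h₁ hP hQ)
      (inv_nonneg.2 (sub_nonneg.2 h₁.le))

end Nonnegativity

section Sibson

variable {X Y : Type*} [Fintype X] [Fintype Y]

/-- The unnormalised weight of `y` in Sibson's minimiser `sibsonDist`. Where `P_X(x) = 0` the
summand is `0` also for `α > 1`, because `0 * ⊤ = 0`. -/
def sibsonWeight (α : ℝ) (P : X × Y → ℝ≥0∞) (y : Y) : ℝ≥0∞ :=
  (∑ x, P (x, y) ^ α * margX P x ^ (1 - α)) ^ α⁻¹

/-- Sibson's distribution: the `Q_Y` attaining the minimum in `I_α(X:Y)_P`. At `α = 1` it is the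
`Y`-marginal of `P`. -/
def sibsonDist (α : ℝ) (P : X × Y → ℝ≥0∞) (y : Y) : ℝ≥0∞ :=
  sibsonWeight α P y / ∑ z, sibsonWeight α P z

variable {α : ℝ} {P : X × Y → ℝ≥0∞}

lemma sibsonWeight_ne_top (hα : 0 < α) (hP : IsDist P) (y : Y) : sibsonWeight α P y ≠ ⊤ := by
  refine ENNReal.rpow_ne_top_of_nonneg (inv_nonneg.2 hα.le) (ENNReal.sum_ne_top.2 fun x _ => ?_)
  rcases eq_or_ne (margX P x) 0 with h₀ | h₀
  · simp [nonpos_iff_eq_zero.1 (h₀ ▸ le_margX P (x, y)), hα]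
  · exact ENNReal.mul_ne_top (ENNReal.rpow_ne_top_of_nonneg hα.le (hP.ne_top _))
      (by simp [ENNReal.rpow_eq_top_iff, h₀, (isDist_margX hP).ne_top x])

lemma eq_zero_of_sibsonWeight_eq_zero (hα : 0 < α) (hP : IsDist P)
    {y : Y} (hy : sibsonWeight α P y = 0) (x : X) : P (x, y) = 0 := by
  have hsum : ∑ x, P (x, y) ^ α * margX P x ^ (1 - α) = 0 := by
    simpa [sibsonWeight, ENNReal.rpow_eq_zero_iff, hα, hα.le, hα.not_gt] using hy
  rcases mul_eq_zero.1 (Finset.sum_eq_zero_iff.1 hsum x (Finset.mem_univ x)) with h | h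
  · exact (ENNReal.rpow_eq_zero_iff_of_pos hα).1 h
  · have hx : margX P x = 0 := ((ENNReal.rpow_eq_zero_iff.1 h).resolve_right
      fun hx => (isDist_margX hP).ne_top x hx.1).1
    exact nonpos_iff_eq_zero.1 (hx ▸ le_margX P (x, y))

lemma sum_sibsonWeight_ne_zero (hα : 0 < α) (hP : IsDist P) : ∑ y, sibsonWeight α P y ≠ 0 := by
  intro h
  have hP₀ (p : X × Y) : P p = 0 := eq_zero_of_sibsonWeight_eq_zero hα hP
    (Finset.sum_eq_zero_iff.1 h p.2 (Finset.mem_univ _)) p.1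
  simp [IsDist, hP₀] at hP

lemma sum_sibsonWeight_ne_top (hα : 0 < α) (hP : IsDist P) : ∑ y, sibsonWeight α P y ≠ ⊤ :=
  ENNReal.sum_ne_top.2 fun y _ => sibsonWeight_ne_top hα hP y

lemma isDist_sibsonDist (hα : 0 < α) (hP : IsDist P) : IsDist (sibsonDist α P) := by
  simp only [IsDist, sibsonDist, div_eq_mul_inv, ← Finset.sum_mul]
  exact ENNReal.mul_inv_cancel (sum_sibsonWeight_ne_zero hα hP) (sum_sibsonWeight_ne_top hα hP)

lemma sibsonDist_one (hP : IsDist P) (y : Y) : sibsonDist 1 P y = ∑ x, P (x, y) := by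
  have hweight (z : Y) : sibsonWeight 1 P z = ∑ x, P (x, z) := by simp [sibsonWeight]
  simp only [sibsonDist, hweight, ← Fintype.sum_prod_type_right P]
  rw [hP, div_one]

lemma sum_rpow_mul_margX_mul_rpow (hα : 0 < α) (hP : IsDist P) {R : Y → ℝ≥0∞} (hR : ∀ y, R y ≠ ⊤) :
    ∑ p, P p ^ α * (margX P p.1 * R p.2) ^ (1 - α)
      = (∑ y, sibsonWeight α P y) ^ α * ∑ y, sibsonDist α P y ^ α * R y ^ (1 - α) := by
  have hG₀ := sum_sibsonWeight_ne_zero hα hP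
  have hG := sum_sibsonWeight_ne_top hα hP
  rw [Fintype.sum_prod_type_right, Finset.mul_sum]
  refine Finset.sum_congr rfl fun y _ => ?_
  calc ∑ x, P (x, y) ^ α * (margX P x * R y) ^ (1 - α)
      = sibsonWeight α P y ^ α * R y ^ (1 - α) := by
        simp only [sibsonWeight, ENNReal.rpow_inv_rpow hα.ne', Finset.sum_mul,
          ENNReal.mul_rpow_of_ne_top ((isDist_margX hP).ne_top _) (hR y), mul_assoc]
    _ = ((∑ z, sibsonWeight α P z) * sibsonDist α P y) ^ α * R y ^ (1 - α) := by
        rw [sibsonDist, ENNReal.mul_div_cancel hG₀ hG]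
    _ = (∑ z, sibsonWeight α P z) ^ α * (sibsonDist α P y ^ α * R y ^ (1 - α)) := by
        rw [ENNReal.mul_rpow_of_nonneg _ _ hα.le, mul_assoc]

lemma expRenyiD_margX_mul_of_ne_one (hα : 0 < α) (h₁ : α ≠ 1) (hP : IsDist P)
    {R : Y → ℝ≥0∞} (hR : ∀ y, R y ≠ ⊤) :
    expRenyiD α P (fun p => margX P p.1 * R p.2)
      = ((∑ y, sibsonWeight α P y) ^ α) ^ (α - 1)⁻¹ * expRenyiD α (sibsonDist α P) R := by
  have hG₀ := sum_sibsonWeight_ne_zero hα hP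
  have hG := sum_sibsonWeight_ne_top hα hP
  rw [expRenyiD_of_ne_one h₁, expRenyiD_of_ne_one h₁, sum_rpow_mul_margX_mul_rpow hα hP hR,
    mul_rpow_of_ne_zero_of_ne_top (by simp [ENNReal.rpow_eq_zero_iff, hG₀, hα.not_gt])
      (ENNReal.rpow_ne_top_of_nonneg hα.le hG)]

lemma expRenyiD_one_margX_mul (hP : IsDist P) (R : Y → ℝ≥0∞) :
    expRenyiD 1 P (fun p => margX P p.1 * R p.2)
      = expRenyiD 1 P (fun p => margX P p.1 * sibsonDist 1 P p.2)
        * expRenyiD 1 (sibsonDist 1 P) R := by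
  have hterm (p : X × Y) : (P p / (margX P p.1 * R p.2)) ^ (P p).toReal
      = (P p / (margX P p.1 * sibsonDist 1 P p.2)) ^ (P p).toReal
        * (sibsonDist 1 P p.2 / R p.2) ^ (P p).toReal := by
    rcases eq_or_ne (P p) 0 with h₀ | h₀
    · simp [h₀]
    have hA₀ : margX P p.1 ≠ 0 := (h₀.bot_lt.trans_le (le_margX P p)).ne'
    have hA := (isDist_margX hP).ne_top p.1
    have hq₀ : sibsonDist 1 P p.2 ≠ 0 := fun h =>
      h₀ (Finset.sum_eq_zero_iff.1 (sibsonDist_one hP p.2 ▸ h) p.1 (Finset.mem_univ _))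
    have hq := (isDist_sibsonDist one_pos hP).ne_top p.2
    have hratio : P p / (margX P p.1 * R p.2)
        = P p / (margX P p.1 * sibsonDist 1 P p.2) * (sibsonDist 1 P p.2 / R p.2) := by
      simp only [div_eq_mul_inv, ENNReal.mul_inv (.inl hA₀) (.inl hA)]
      rw [← mul_assoc (P p), ← mul_assoc (P p), mul_assoc _ (sibsonDist 1 P p.2)⁻¹,
        ← mul_assoc (sibsonDist 1 P p.2)⁻¹, ENNReal.inv_mul_cancel hq₀ hq, one_mul]
    rw [hratio, ENNReal.mul_rpow_of_nonneg _ _ ENNReal.toReal_nonneg]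
  have hmarg (y : Y) : ∏ x, (sibsonDist 1 P y / R y) ^ (P (x, y)).toReal
      = (sibsonDist 1 P y / R y) ^ (sibsonDist 1 P y).toReal := by
    rw [prod_rpow_toReal _ _ fun x _ => hP.ne_top _, sibsonDist_one hP]
  simp only [expRenyiD_one, hterm, Finset.prod_mul_distrib]
  congr 1
  rw [Fintype.prod_prod_type_right]
  exact Finset.prod_congr rfl fun y _ => hmarg y

lemma expRenyiD_sibson_identity (hα : 0 < α) (hP : IsDist P) {R : Y → ℝ≥0∞} (hR : ∀ y, R y ≠ ⊤) :
    expRenyiD α P (fun p => margX P p.1 * R p.2)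
      = expRenyiD α P (fun p => margX P p.1 * sibsonDist α P p.2)
        * expRenyiD α (sibsonDist α P) R := by
  rcases eq_or_ne α 1 with rfl | h₁
  · exact expRenyiD_one_margX_mul hP R
  · have hQ := isDist_sibsonDist hα hP
    rw [expRenyiD_margX_mul_of_ne_one hα h₁ hP hR,
      expRenyiD_margX_mul_of_ne_one hα h₁ hP hQ.ne_top, expRenyiD_self hQ, mul_one]

lemma renyiMI_eq_renyiD_sibsonDist (hα : 0 < α) (hP : IsDist P) :
    renyiMI (ENNReal.ofReal α) P
      = renyiD (ENNReal.ofReal α) P fun p => margX P p.1 * sibsonDist α P p.2 := by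
  have hQ := isDist_sibsonDist hα hP
  refine le_antisymm (iInf_le_of_le ⟨_, hQ⟩ le_rfl) (le_iInf fun ⟨R, hR⟩ => ?_)
  rw [renyiD_eq_elog2_expRenyiD hα, renyiD_eq_elog2_expRenyiD hα,
    expRenyiD_sibson_identity hα hP hR.ne_top]
  exact elog2_mono (le_mul_of_one_le_right' (one_le_expRenyiD hα hQ hR))

lemma sibsonWeight_prodJoint (n : ℕ) (hα : 0 < α) (hP : IsDist P) (ys : Fin n → Y) :
    sibsonWeight α (prodJoint n P) ys = ∏ i, sibsonWeight α P (ys i) := by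
  simp only [sibsonWeight]
  rw [ENNReal.prod_rpow_of_nonneg (inv_nonneg.2 hα.le), margX_prodJoint, Fintype.prod_sum]
  congr 1
  refine Finset.sum_congr rfl fun xs _ => ?_
  rw [Finset.prod_mul_distrib, ENNReal.prod_rpow_of_nonneg hα.le,
    ENNReal.prod_rpow_of_ne_top fun i _ => (isDist_margX hP).ne_top _, prodJoint, prodDist]

lemma sibsonDist_prodJoint (n : ℕ) (hα : 0 < α) (hP : IsDist P) :
    sibsonDist α (prodJoint n P) = prodDist n (sibsonDist α P) := by
  funext ys
  simp only [sibsonDist, prodDist, sibsonWeight_prodJoint n hα hP]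
  rw [ENNReal.prod_div_distrib_of_ne_top fun _ _ => sum_sibsonWeight_ne_top hα hP,
    ← Fintype.sum_pow, Finset.prod_const, Finset.card_univ, Fintype.card_fin]

lemma renyiMI_prodJoint (n : ℕ) (hα : 0 < α) (hP : IsDist P) :
    renyiMI (ENNReal.ofReal α) (prodJoint n P)
      = ((n : ℝ) : EReal) * renyiMI (ENNReal.ofReal α) P := by
  rw [renyiMI_eq_renyiD_sibsonDist hα hP, renyiMI_eq_renyiD_sibsonDist hα (isDist_prodJoint n hP),
    margX_prodJoint, sibsonDist_prodJoint n hα hP,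
    renyiD_prodJoint n hα hP (isDist_margX hP).ne_top (isDist_sibsonDist hα hP).ne_top]

end Sibson

section Types

variable {Y : Type*} [Fintype Y] [DecidableEq Y] {n : ℕ}

lemma typeClassCard_pos (ys : Fin n → Y) : 0 < typeClassCard ys :=
  Finset.card_pos.2 ⟨ys, by simp⟩

lemma numTypes_pos (Y : Type*) [Fintype Y] [DecidableEq Y] (n : ℕ) [Nonempty (Fin n → Y)] :
    0 < numTypes Y n :=
  Finset.card_pos.2 (Finset.univ_nonempty.image _)

lemma numTypes_le (Y : Type*) [Fintype Y] [DecidableEq Y] (n : ℕ) :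
    numTypes Y n ≤ (n + 1) ^ Fintype.card Y := by
  have hsub : (Finset.univ.image fun ys : Fin n → Y => seqType ys)
      ⊆ Fintype.piFinset fun _ => Finset.range (n + 1) := by
    refine Finset.image_subset_iff.2 fun ys _ => Fintype.mem_piFinset.2 fun y => ?_
    exact Finset.mem_range_succ_iff.2 ((Finset.card_le_univ _).trans_eq (Fintype.card_fin n))
  simpa [numTypes] using Finset.card_le_card hsub

lemma elog2_numTypes_le (Y : Type*) [Fintype Y] [DecidableEq Y] (n : ℕ) [Nonempty (Fin n → Y)] :
    elog2 (numTypes Y n) ≤ ((Fintype.card Y * Real.logb 2 ((n : ℝ) + 1) : ℝ) : EReal) := by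
  rw [elog2, if_neg (mod_cast (numTypes_pos Y n).ne'), if_neg (ENNReal.natCast_ne_top _),
    ENNReal.toReal_natCast, EReal.coe_le_coe_iff, ← Real.logb_pow]
  exact Real.logb_le_logb_of_le one_lt_two (mod_cast numTypes_pos Y n) (mod_cast numTypes_le Y n)

lemma prodDist_eq_prod_pow_seqType (Q : Y → ℝ≥0∞) (ys : Fin n → Y) :
    prodDist n Q ys = ∏ y, Q y ^ seqType ys y := by
  simp only [prodDist, seqType, ← Finset.prod_const]
  exact (Finset.prod_fiberwise' Finset.univ ys Q).symm

lemma sum_typeClass_eq_card_mul {f : (Fin n → Y) → ℝ≥0∞}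
    (hf : ∀ ys zs, seqType zs = seqType ys → f zs = f ys) (ys : Fin n → Y) :
    ∑ zs : Fin n → Y with seqType zs = seqType ys, f zs = typeClassCard ys * f ys := by
  rw [← nsmul_eq_mul]
  exact Finset.sum_eq_card_nsmul fun zs hzs => hf ys zs (Finset.mem_filter.1 hzs).2

lemma typeClassCard_mul_PhiY (ys : Fin n → Y) :
    typeClassCard ys * PhiY Y n ys = (numTypes Y n : ℝ≥0∞)⁻¹ := by
  have hcard : (typeClassCard ys : ℝ≥0∞) ≠ 0 := mod_cast (typeClassCard_pos ys).ne'
  rw [PhiY, ENNReal.mul_inv (.inr (ENNReal.natCast_ne_top _)) (.inr hcard), mul_left_comm,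
    ENNReal.mul_inv_cancel hcard (ENNReal.natCast_ne_top _), mul_one]

lemma PhiY_eq_of_seqType_eq (ys zs : Fin n → Y) (h : seqType zs = seqType ys) :
    PhiY Y n zs = PhiY Y n ys := by
  simp only [PhiY, typeClassCard, h]

lemma isDist_PhiY [Nonempty (Fin n → Y)] : IsDist (PhiY Y n) := by
  have hN : (numTypes Y n : ℝ≥0∞) ≠ 0 := mod_cast (numTypes_pos Y n).ne'
  have hclass : ∀ S ∈ Finset.univ.image fun ys : Fin n → Y => seqType ys,
      ∑ zs : Fin n → Y with seqType zs = S, PhiY Y n zs = (numTypes Y n : ℝ≥0∞)⁻¹ := by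
    intro S hS
    obtain ⟨ys, -, rfl⟩ := Finset.mem_image.1 hS
    rw [sum_typeClass_eq_card_mul PhiY_eq_of_seqType_eq, typeClassCard_mul_PhiY]
  rw [IsDist, ← Finset.sum_fiberwise_of_maps_to fun ys hys => Finset.mem_image_of_mem seqType hys,
    Finset.sum_congr rfl hclass, Finset.sum_const, nsmul_eq_mul]
  exact ENNReal.mul_inv_cancel hN (ENNReal.natCast_ne_top _)

lemma prodDist_le_numTypes_mul_PhiY {Q : Y → ℝ≥0∞} (hQ : IsDist Q) (ys : Fin n → Y) :
    prodDist n Q ys ≤ numTypes Y n * PhiY Y n ys := by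
  have hcard : (typeClassCard ys : ℝ≥0∞) ≠ 0 := mod_cast (typeClassCard_pos ys).ne'
  have : Nonempty (Fin n → Y) := ⟨ys⟩
  have hN : (numTypes Y n : ℝ≥0∞) ≠ 0 := mod_cast (numTypes_pos Y n).ne'
  refine (ENNReal.mul_le_mul_iff_right hcard (ENNReal.natCast_ne_top _)).1 ?_
  calc typeClassCard ys * prodDist n Q ys
      = ∑ zs : Fin n → Y with seqType zs = seqType ys, prodDist n Q zs :=
        (sum_typeClass_eq_card_mul
          (fun ys zs h => by simp only [prodDist_eq_prod_pow_seqType, h]) ys).symm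
    _ ≤ ∑ zs, prodDist n Q zs := Finset.sum_le_sum_of_subset (Finset.filter_subset _ _)
    _ = numTypes Y n * (numTypes Y n : ℝ≥0∞)⁻¹ := by
        rw [isDist_prodDist n hQ, ENNReal.mul_inv_cancel hN (ENNReal.natCast_ne_top _)]
    _ = typeClassCard ys * (numTypes Y n * PhiY Y n ys) := by
        rw [← typeClassCard_mul_PhiY ys, mul_left_comm]

end Types

lemma renyiD_prodJoint_PhiY_le {X Y : Type*} [Fintype X] [Fintype Y] [DecidableEq Y]
    (n : ℕ) [Nonempty (Fin n → Y)] {α : ℝ} (hα : 0 < α) {P : X × Y → ℝ≥0∞} (hP : IsDist P) :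
    renyiD (ENNReal.ofReal α) (prodJoint n P)
        (fun p => prodDist n (margX P) p.1 * PhiY Y n p.2)
      ≤ ((n : ℝ) : EReal) * renyiMI (ENNReal.ofReal α) P
        + ((Fintype.card Y * Real.logb 2 ((n : ℝ) + 1) : ℝ) : EReal) := by
  have hQ := isDist_sibsonDist hα hP
  have hN : (numTypes Y n : ℝ≥0∞) ≠ 0 := mod_cast (numTypes_pos Y n).ne'
  rw [renyiMI_eq_renyiD_sibsonDist hα hP,
    ← renyiD_prodJoint n hα hP (isDist_margX hP).ne_top hQ.ne_top]
  refine (renyiD_le_add_elog2_of_le_mul hα (isDist_prodJoint n hP) hN (ENNReal.natCast_ne_top _)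
    fun p => ?_).trans (add_le_add_right (elog2_numTypes_le Y n) _)
  rw [mul_left_comm]
  exact mul_le_mul_right (prodDist_le_numTypes_mul_PhiY hQ p.2) _

/-- **Lemma 20.**  For a joint distribution `P_{XY}`, the uniform type mixture
`Φ_{Y^n}`, any `α > 0` and all `n ≥ 1`:
`I_α(X:Y) ≤ (1/n) D_α(P^{×n} ‖ P_X^{×n} × Φ_{Y^n}) ≤ I_α(X:Y) + (|Y|/n) log₂(n+1)`;
in particular `(1/n) D_α(P^{×n} ‖ P_X^{×n} × Φ_{Y^n}) = I_α(X:Y) + O(log n / n)`. -/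
theorem renyiMI_prod_phi_bounds
    {X Y : Type*} [Fintype X] [Fintype Y] [DecidableEq Y]
    (P : X × Y → ℝ≥0∞) (hP : IsDist P) (α : ℝ) (hα : 0 < α) (n : ℕ) (hn : 0 < n) :
    renyiMI (ENNReal.ofReal α) P ≤
        (((1 : ℝ) / n : ℝ) : EReal) *
          renyiD (ENNReal.ofReal α) (prodJoint n P)
            (fun p => prodDist n (margX P) p.1 * PhiY Y n p.2) ∧
      (((1 : ℝ) / n : ℝ) : EReal) *
          renyiD (ENNReal.ofReal α) (prodJoint n P)
            (fun p => prodDist n (margX P) p.1 * PhiY Y n p.2) ≤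
        renyiMI (ENNReal.ofReal α) P +
          (((Fintype.card Y : ℝ) / n * Real.logb 2 ((n : ℝ) + 1) : ℝ) : EReal) := by
  have hY : Nonempty Y := by
    by_contra hY
    rw [not_nonempty_iff] at hY
    simp [IsDist] at hP
  have hn' : (0 : ℝ) ≤ 1 / n := by positivity
  have hcancel (x : EReal) : ((1 / n : ℝ) : EReal) * (((n : ℝ) : EReal) * x) = x := by
    rw [← mul_assoc, ← EReal.coe_mul, one_div_mul_cancel (by positivity), EReal.coe_one, one_mul]
  have hscale {x y : EReal} (hxy : x ≤ y) : ((1 / n : ℝ) : EReal) * x ≤ ((1 / n : ℝ) : EReal) * y :=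
    mul_le_mul_of_nonneg_left hxy (EReal.coe_nonneg.2 hn')
  constructor
  · rw [← hcancel (renyiMI _ P), ← renyiMI_prodJoint n hα hP, ← margX_prodJoint]
    exact hscale (iInf_le_of_le ⟨PhiY Y n, isDist_PhiY⟩ le_rfl)
  · refine (hscale (renyiD_prodJoint_PhiY_le n hα hP)).trans_eq ?_
    rw [EReal.left_distrib_of_nonneg_of_ne_top (EReal.coe_nonneg.2 hn') (EReal.coe_ne_top _),
      hcancel, ← EReal.coe_mul, ← mul_assoc, one_div_mul_eq_div]

end RST
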